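/- Let Ω be a finite nonempty set, and let < and ≤ be two nonempty binary relations on the powerset of Ω such that < is contained in ≤. Then there exists a probability measure μ on Ω such that for all A, B ⊆ Ω, A < B implies μ(A) < μ(B) and A ≤ B implies μ(A) ≤ μ(B), if and only if the following condition (S+) holds: for every n ≥ 1 and all sequences (A_i)_{i≤n}, (B_i)_{i≤n} of subsets of Ω with (A_i)_{i≤n} ≤₀ (B_i)_{i≤n}, if B_i ≤ A_i for every i < n, then it is not the case that B_n < A_n. -/

import Mathlib

open Finset

variable {Ω : Type*}

/-- The measure of a finite set of states given weights `w`: `μ(A) = ∑_{ω ∈ A} w ω`. -/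
noncomputable def mea (w : Ω → ℝ) (A : Finset Ω) : ℝ := ∑ ω ∈ A, w ω

/-- `w` is a probability weight function: nonnegative and summing to 1. -/
def IsProbWeight [Fintype Ω] (w : Ω → ℝ) : Prop :=
  (∀ ω, 0 ≤ w ω) ∧ (∑ ω, w ω) = 1

/-- The measure is regular: only the empty set has measure 0. -/
def RegularW (w : Ω → ℝ) : Prop := ∀ X : Finset Ω, mea w X = 0 → X = ∅

/-- Conditional measure `μ_A(X) = μ(A ∩ X) / μ(A)`. -/
noncomputable def condMea [DecidableEq Ω] (w : Ω → ℝ) (A X : Finset Ω) : ℝ := mea w (A ∩ X) / mea w A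

/-- `X` is `(m,t)`-stable for a set function `m`: `X` is nonempty and for every `E` with
`X ∩ E ≠ ∅` and `m E > 0`, `m (X ∩ E) / m E > t`. -/
def StableFor [DecidableEq Ω] (m : Finset Ω → ℝ) (t : ℝ) (X : Finset Ω) : Prop :=
  X.Nonempty ∧ ∀ E : Finset Ω, (X ∩ E).Nonempty → 0 < m E → t < m (X ∩ E) / m E

/-- `S` is the `⊆`-least `(m,t)`-stable set. -/
def IsLeastStable [DecidableEq Ω] (m : Finset Ω → ℝ) (t : ℝ) (S : Finset Ω) : Prop :=
  StableFor m t S ∧ ∀ X : Finset Ω, StableFor m t X → S ⊆ X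

/-- `w` represents the selection function `σ` for threshold `t`. -/
def RepresentsAt [DecidableEq Ω] (w : Ω → ℝ) (t : ℝ) (σ : Finset Ω → Finset Ω) : Prop :=
  ∀ E : Finset Ω, (0 < mea w E → IsLeastStable (condMea w E) t (σ E)) ∧
    (mea w E = 0 → σ E = ∅)

/-- Selection axiom (S1): `σ(X) = ∅` only if `X = ∅`. -/
def SelA1 (σ : Finset Ω → Finset Ω) : Prop := ∀ X : Finset Ω, σ X = ∅ → X = ∅

/-- Selection axiom (S2): `σ(X) ⊆ X`. -/
def SelA2 (σ : Finset Ω → Finset Ω) : Prop := ∀ X : Finset Ω, σ X ⊆ X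

/-- Selection axiom (S3): if `σ(A) ∩ B ≠ ∅` then `σ(A ∩ B) ⊆ σ(A) ∩ B`. -/
def SelA3 [DecidableEq Ω] (σ : Finset Ω → Finset Ω) : Prop :=
  ∀ A B : Finset Ω, (σ A ∩ B).Nonempty → σ (A ∩ B) ⊆ σ A ∩ B

/-- Selection axiom (S4ₙ) for every `n`: if `σ(A ∪ Xᵢ) = Xᵢ` for all `i`, then
`σ(A ∪ ⋃ᵢ Xᵢ) ⊆ ⋃ᵢ Xᵢ`. -/
def SelA4 [DecidableEq Ω] (σ : Finset Ω → Finset Ω) : Prop :=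
  ∀ n : ℕ, ∀ A : Finset Ω, ∀ X : Fin (n + 1) → Finset Ω,
    (∀ i, σ (A ∪ X i) = X i) →
    σ (A ∪ univ.biUnion X) ⊆ univ.biUnion X

/-- `ω ≻_σ X` iff `ω ∉ X` and `σ (X ∪ {ω}) = {ω}`. -/
def succS [DecidableEq Ω] (σ : Finset Ω → Finset Ω) (ω : Ω) (X : Finset Ω) : Prop :=
  ω ∉ X ∧ σ (X ∪ {ω}) = {ω}

/-- `X ⪰_σ ω` iff `ω ∈ X` or `σ (X ∪ {ω}) ≠ {ω}`. -/
def succeqS [DecidableEq Ω] (σ : Finset Ω → Finset Ω) (X : Finset Ω) (ω : Ω) : Prop :=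
  ω ∈ X ∨ σ (X ∪ {ω}) ≠ {ω}

/-- `A ⪰*_σ B` iff either `A` is a singleton `{a}` with `a ≻_σ B`, or `B` is a singleton
`{b}` with `A ⪰_σ b`. -/
def geStar [DecidableEq Ω] (σ : Finset Ω → Finset Ω) (A B : Finset Ω) : Prop :=
  (∃ a, A = {a} ∧ succS σ a B) ∨ (∃ b, B = {b} ∧ succeqS σ A b)

/-- Two sequences of sets are balanced: every state occurs in exactly as many `A i`'s
as `B i`'s. -/
def BalancedSeq {n : ℕ} (A B : Fin n → Finset Ω) : Prop :=
  ∀ ω : Ω, Nat.card {i // ω ∈ A i} = Nat.card {i // ω ∈ B i}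

/-- `(A_i) ≤₀ (B_i)`: every state occurs in at most as many `A i`'s as `B i`'s. -/
def DomSeq {n : ℕ} (A B : Fin n → Finset Ω) : Prop :=
  ∀ ω : Ω, Nat.card {i // ω ∈ A i} ≤ Nat.card {i // ω ∈ B i}

/-- The (Scott) axiom for the induced order `⪰*_σ`. -/
def ScottAx [DecidableEq Ω] (σ : Finset Ω → Finset Ω) : Prop :=
  ∀ n : ℕ, ∀ A B : Fin (n + 1) → Finset Ω, BalancedSeq A B →
    (∀ i, geStar σ (A i) (B i)) → ∀ i, geStar σ (B i) (A i)

/-!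
A nonnegative weight `w` represents `(lt, le)` iff it solves the homogeneous linear system
`0 ≤ (1_B - 1_A) ⬝ᵥ w` for `le A B`, with strict inequality for `lt A B`. By Farkas' lemma over `ℚ`
the only obstruction to solvability is a nonnegative combination of the vectors `1_B - 1_A` which is
`≤ 0` and has a positive coefficient at some strict pair. Clearing denominators makes the
coefficients natural numbers, and listing every pair as often as its coefficient says turns the
obstruction into a violation of (S+).
-/

section LinearInequalities

section OrderedRing

variable {R M : Type*} [CommRing R] [PartialOrder R] [IsOrderedRing R] [AddCommGroup M] [Module R M]

theorem apply_nonneg_of_mem_hull {S : Set (Module.Dual R M)} {f : Module.Dual R M} {x : M}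
    (hf : f ∈ PointedCone.hull R S) (hx : ∀ g ∈ S, 0 ≤ g x) : 0 ≤ f x := by
  have hx_dual : x ∈ PointedCone.dual LinearMap.id S := fun g hg ↦ hx g hg
  rw [← PointedCone.dual_hull] at hx_dual
  exact hx_dual hf

theorem exists_mem_hull_comp_eq {N : Type*} [AddCommGroup N] [Module R N] (φ : N →ₗ[R] M)
    {S : Set (Module.Dual R M)} {f : Module.Dual R N}
    (hf : f ∈ PointedCone.hull R ((fun g ↦ g.comp φ) '' S)) :
    ∃ g ∈ PointedCone.hull R S, g.comp φ = f := by
  have map_hull : (PointedCone.hull R S).map φ.dualMap =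
      PointedCone.hull R ((fun g ↦ g.comp φ) '' S) :=
    Submodule.map_span _ S
  rwa [← map_hull] at hf

end OrderedRing

variable {K V ι : Type*} [Field K] [AddCommGroup V] [Module K V]

theorem eq_add_smul_of_forall_apply_sub_smul_eq {f b b' : Module.Dual K V} {y : V}
    (h : ∀ x, b (x - (f x / f y) • y) = b' (x - (f x / f y) • y)) :
    b = b' + ((b y - b' y) / f y) • f := by
  ext x
  have hx := h x
  simp only [map_sub, map_smul, smul_eq_mul] at hx
  simp only [LinearMap.add_apply, LinearMap.smul_apply, smul_eq_mul]
  linear_combination hx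

variable [LinearOrder K] [IsStrictOrderedRing K]

/-- **Farkas' lemma** in purely algebraic form: unlike `ProperCone.hyperplane_separation`, it needs
no completeness of the scalars, so it applies over `ℚ`. -/
theorem mem_hull_image_of_forall_nonneg (s : Finset ι) (a : ι → Module.Dual K V)
    {b : Module.Dual K V} (h : ∀ x, (∀ i ∈ s, 0 ≤ a i x) → 0 ≤ b x) :
    b ∈ PointedCone.hull K (a '' s) := by
  classical
  induction s using Finset.induction_on generalizing a b with
  | empty =>
    have hb : b = 0 := by
      ext x
      have h_neg := h (-x) (by simp)
      rw [map_neg] at h_neg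
      exact le_antisymm (neg_nonneg.mp h_neg) (h x (by simp))
    exact hb ▸ zero_mem _
  | insert j s _ ih =>
    have hull_le : PointedCone.hull K (a '' s) ≤ PointedCone.hull K (a '' ↑(insert j s)) :=
      Submodule.span_mono (Set.image_mono (by simp))
    by_cases hs : ∀ x, (∀ i ∈ s, 0 ≤ a i x) → 0 ≤ b x
    · exact hull_le (ih a hs)
    push Not at hs
    obtain ⟨y, hy, hby⟩ := hs
    have hjy : a j y < 0 := by
      by_contra! hjy
      exact hby.not_ge (h y ((forall_mem_insert ..).mpr ⟨hjy, hy⟩))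
    -- On the kernel of `a j` the constraint `j` is void, so project there along `y` and recurse.
    let π : V →ₗ[K] V := LinearMap.id - (a j).smulRight ((a j y)⁻¹ • y)
    have hπ (x : V) : π x = x - (a j x / a j y) • y := by
      simp [π, smul_smul, div_eq_mul_inv]
    have hjπ (x : V) : a j (π x) = 0 := by
      simp [hπ, hjy.ne]
    have hbπ : b.comp π ∈ PointedCone.hull K ((fun i ↦ (a i).comp π) '' s) :=
      ih _ fun x hx ↦ h (π x) ((forall_mem_insert ..).mpr ⟨(hjπ x).ge, hx⟩)
    rw [← Set.image_image (fun f ↦ f.comp π) a] at hbπ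
    obtain ⟨b', hb', hb'π⟩ := exists_mem_hull_comp_eq π hbπ
    have hb'y : 0 ≤ b' y := apply_nonneg_of_mem_hull hb' (Set.forall_mem_image.mpr hy)
    have hb_eq : b = b' + ((b y - b' y) / a j y) • a j :=
      eq_add_smul_of_forall_apply_sub_smul_eq fun x ↦ by
        simpa only [LinearMap.comp_apply, hπ] using (LinearMap.congr_fun hb'π x).symm
    rw [hb_eq]
    exact add_mem (hull_le hb') (PointedCone.smul_mem _
      (div_nonneg_of_nonpos (by linarith) hjy.le)
      (PointedCone.subset_hull (Set.mem_image_of_mem a (by simp))))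

theorem exists_forall_nonneg_forall_pos [Fintype ι] (a : ι → Module.Dual K V) (T : Set ι)
    (h : ∀ c : ι → K, 0 ≤ c → ∑ i, c i • a i = 0 → ∀ j ∈ T, c j = 0) :
    ∃ x, (∀ i, 0 ≤ a i x) ∧ ∀ j ∈ T, 0 < a j x := by
  classical
  have exists_pos (j : T) : ∃ x, (∀ i, 0 ≤ a i x) ∧ 0 < a j x := by
    by_contra! hj
    have hmem : -a j ∈ PointedCone.hull K (a '' ↑(univ : Finset ι)) :=
      mem_hull_image_of_forall_nonneg univ a fun x hx ↦
        neg_nonneg.mpr (hj x fun i ↦ hx i (mem_univ i))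
    rw [coe_univ, Set.image_univ] at hmem
    obtain ⟨c, hc⟩ := (Submodule.mem_span_range_iff_exists_fun _).mp hmem
    let e : ι → K := Pi.single j 1
    have he : 0 ≤ e := Pi.single_nonneg.mpr zero_le_one
    have hsum : ∑ i, ((c i : K) + e i) • a i = 0 := by
      simp [e, add_smul, sum_add_distrib, hc, Pi.single_apply]
    have hcj : (c j : K) + e j = 0 := h _ (fun i ↦ add_nonneg (c i).2 (he i)) hsum j j.2
    have hej : e j = 1 := Pi.single_eq_same ..
    linarith [(c j).2]
  choose x hx_nonneg hx_pos using exists_pos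
  refine ⟨∑ j, x j, fun i ↦ ?_, fun i hi ↦ ?_⟩ <;> rw [map_sum]
  · exact sum_nonneg fun j _ ↦ hx_nonneg j i
  · exact sum_pos' (fun j _ ↦ hx_nonneg j i) ⟨⟨i, hi⟩, mem_univ _, hx_pos ⟨i, hi⟩⟩

theorem exists_nonneg_forall_dotProduct_pos [Fintype Ω] [Fintype ι] (v : ι → Ω → K) (T : Set ι)
    (h : ∀ c : ι → K, 0 ≤ c → ∑ i, c i • v i ≤ 0 → ∀ j ∈ T, c j = 0) :
    ∃ w : Ω → K, 0 ≤ w ∧ (∀ i, 0 ≤ v i ⬝ᵥ w) ∧ ∀ j ∈ T, 0 < v j ⬝ᵥ w := by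
  classical
  let a : ι ⊕ Ω → Module.Dual K (Ω → K) :=
    Sum.elim (fun i ↦ dotProductEquiv K Ω (v i)) LinearMap.proj
  obtain ⟨w, hw_nonneg, hw_pos⟩ := exists_forall_nonneg_forall_pos a (Sum.inl '' T) <| by
    rintro c hc hsum _ ⟨j, hj, rfl⟩
    refine h (c ∘ Sum.inl) (fun i ↦ hc _) (fun ω ↦ ?_) j hj
    have hω : ∑ i, c (.inl i) * v i ω + c (.inr ω) = 0 := by
      simpa [a, Pi.single_apply] using LinearMap.congr_fun hsum (Pi.single ω 1)
    have hsum_nonpos : ∑ i, c (.inl i) * v i ω ≤ 0 := by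
      linarith [show 0 ≤ c (.inr ω) from hc _]
    simpa using hsum_nonpos
  exact ⟨w, fun ω ↦ hw_nonneg (.inr ω), fun i ↦ hw_nonneg (.inl i),
    fun j hj ↦ hw_pos _ (Set.mem_image_of_mem _ hj)⟩

theorem exists_nonneg_forall_dotProduct_pos_of_nat [Fintype Ω] [Fintype ι] (v : ι → Ω → ℚ)
    (T : Set ι) (h : ∀ n : ι → ℕ, ∑ i, n i • v i ≤ 0 → ∀ j ∈ T, n j = 0) :
    ∃ w : Ω → ℚ, 0 ≤ w ∧ (∀ i, 0 ≤ v i ⬝ᵥ w) ∧ ∀ j ∈ T, 0 < v j ⬝ᵥ w := by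
  refine exists_nonneg_forall_dotProduct_pos v T fun c hc hsum j hj ↦ ?_
  lift c to ι → ℚ≥0 using hc
  obtain ⟨N, hN⟩ := IsLocalization.exist_integer_multiples_of_finite (nonZeroDivisors ℕ) c
  choose n hn using hN
  have hn_nnrat (i : ι) : (n i : ℚ≥0) = (N : ℕ) * c i := by simpa using hn i
  have hn_rat (i : ι) : (n i : ℚ) = (N : ℕ) * (c i : ℚ) := mod_cast hn_nnrat i
  have hsum_nat : ∑ i, n i • v i = (N : ℕ) • ∑ i, (c i : ℚ) • v i := by
    simp_rw [← Nat.cast_smul_eq_nsmul ℚ, hn_rat, smul_sum, smul_smul]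
  have hnj : n j = 0 :=
    h n (hsum_nat ▸ smul_nonpos_of_nonneg_of_nonpos (Nat.zero_le _) hsum) j hj
  simpa [hnj, nonZeroDivisors.coe_ne_zero N] using hn_rat j

end LinearInequalities

section Measure

theorem mea_div (w : Ω → ℝ) (r : ℝ) (A : Finset Ω) :
    mea (fun ω ↦ w ω / r) A = mea w A / r :=
  (sum_div ..).symm

theorem mea_ratCast (w : Ω → ℚ) (A : Finset Ω) :
    mea (fun ω ↦ (w ω : ℝ)) A = (∑ ω ∈ A, w ω : ℚ) :=
  (Rat.cast_sum ..).symm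

theorem sum_pos_of_mea_lt_mea [Fintype Ω] {w : Ω → ℝ} (hw : 0 ≤ w) {A B : Finset Ω}
    (hAB : mea w A < mea w B) : 0 < ∑ ω, w ω :=
  calc 0 ≤ mea w A := sum_nonneg fun ω _ ↦ hw ω
    _ < mea w B := hAB
    _ ≤ ∑ ω, w ω := sum_le_univ_sum_of_nonneg hw

theorem isProbWeight_div_sum [Fintype Ω] {w : Ω → ℝ} (hw : 0 ≤ w) (hpos : 0 < ∑ ω, w ω) :
    IsProbWeight fun ω ↦ w ω / ∑ ω, w ω :=
  ⟨fun ω ↦ div_nonneg (hw ω) hpos.le, by rw [← sum_div, div_self hpos.ne']⟩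

theorem sum_mea_eq_sum_mul_card {ι : Type*} [Fintype ι] (w : Ω → ℝ) {A : ι → Finset Ω}
    {s : Finset Ω} (hA : ∀ i, A i ⊆ s) :
    ∑ i, mea w (A i) = ∑ ω ∈ s, w ω * Nat.card {i // ω ∈ A i} := by
  classical
  calc ∑ i, mea w (A i)
    _ = ∑ i, ∑ ω ∈ s, if ω ∈ A i then w ω else 0 := by
      simp only [mea, sum_ite_mem, inter_eq_right.mpr (hA _)]
    _ = ∑ ω ∈ s, ∑ i, if ω ∈ A i then w ω else 0 := sum_comm
    _ = ∑ ω ∈ s, w ω * Nat.card {i // ω ∈ A i} := by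
      simp only [← sum_filter, sum_const, Nat.card_eq_fintype_card, Fintype.card_subtype,
        nsmul_eq_mul, mul_comm]

theorem DomSeq.sum_mea_le {n : ℕ} {A B : Fin n → Finset Ω} (hAB : DomSeq A B)
    {w : Ω → ℝ} (hw : 0 ≤ w) : ∑ i, mea w (A i) ≤ ∑ i, mea w (B i) := by
  classical
  have hA (i : Fin n) : A i ⊆ univ.biUnion A ∪ univ.biUnion B :=
    (subset_biUnion_of_mem A (mem_univ i)).trans subset_union_left
  have hB (i : Fin n) : B i ⊆ univ.biUnion A ∪ univ.biUnion B :=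
    (subset_biUnion_of_mem B (mem_univ i)).trans subset_union_right
  rw [sum_mea_eq_sum_mul_card w hA, sum_mea_eq_sum_mul_card w hB]
  gcongr with ω
  · exact hw ω
  · exact hAB ω

end Measure

/-- Condition (S+) on a pair of relations between events, the cancellation axiom equivalent to their
joint representability. The sequences have length `n + 1`, which builds in the requirement that they
be nonempty. -/
def SPlusAx (lt le : Finset Ω → Finset Ω → Prop) : Prop :=
  ∀ n : ℕ, ∀ A B : Fin (n + 1) → Finset Ω, DomSeq A B →
    (∀ i : Fin n, le (B i.castSucc) (A i.castSucc)) → ¬ lt (B (Fin.last n)) (A (Fin.last n))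

theorem natCard_sigma_fin_subtype {ι : Type*} [Fintype ι] (n : ι → ℕ) (p : ι → Prop)
    [DecidablePred p] :
    Nat.card {x : Σ i, Fin (n i) // p x.1} = ∑ i, if p i then n i else 0 := by
  rw [Nat.card_congr (Equiv.subtypeSigmaEquiv (fun i ↦ Fin (n i)) p), Nat.card_sigma]
  simp only [Nat.card_fin, ← sum_filter]
  exact (sum_subtype _ (by simp) n).symm

namespace SPlusAx

variable {lt le : Finset Ω → Finset Ω → Prop}

theorem of_mea {w : Ω → ℝ} (hw : 0 ≤ w)
    (hlt : ∀ A B, lt A B → mea w A < mea w B) (hle : ∀ A B, le A B → mea w A ≤ mea w B) :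
    SPlusAx lt le := by
  intro n A B hAB hBA hlast
  have hsum : ∑ i, mea w (A i) ≤ ∑ i, mea w (B i) := hAB.sum_mea_le hw
  rw [Fin.sum_univ_castSucc, Fin.sum_univ_castSucc] at hsum
  have hinit : ∑ i : Fin n, mea w (B i.castSucc) ≤ ∑ i : Fin n, mea w (A i.castSucc) :=
    sum_le_sum fun i _ ↦ hle _ _ (hBA i)
  linarith [hlt _ _ hlast]

theorem not_lt_of_card_le (h : SPlusAx lt le) {J : Type*} [Finite J] {A B : J → Finset Ω}
    (hAB : ∀ ω, Nat.card {j // ω ∈ A j} ≤ Nat.card {j // ω ∈ B j})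
    (hBA : ∀ j, le (B j) (A j)) (j : J) : ¬ lt (B j) (A j) := by
  have : Nonempty J := ⟨j⟩
  obtain ⟨n, hn⟩ := Nat.exists_eq_add_one.mpr (Nat.card_pos (α := J))
  let e : Fin (n + 1) ≃ J := (Finite.equivFinOfCardEq hn).symm.setValue (Fin.last n) j
  have card_comp (C : J → Finset Ω) (ω : Ω) :
      Nat.card {i // ω ∈ C (e i)} = Nat.card {j // ω ∈ C j} :=
    Nat.card_congr (e.subtypeEquiv fun _ ↦ Iff.rfl)
  have hdom : DomSeq (A ∘ e) (B ∘ e) := fun ω ↦ by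
    simpa only [Function.comp_apply, card_comp] using hAB ω
  have hlast : e (Fin.last n) = j := Equiv.setValue_eq ..
  simpa only [Function.comp_apply, hlast] using h n (A ∘ e) (B ∘ e) hdom fun i ↦ hBA _

theorem eq_zero_of_sum_smul_indicator_le (h : SPlusAx lt le)
    [Fintype {p : Finset Ω × Finset Ω // le p.1 p.2}]
    (n : {p : Finset Ω × Finset Ω // le p.1 p.2} → ℕ)
    (hn : ∑ p, n p • ((p.1.2 : Set Ω).indicator 1 - (p.1.1 : Set Ω).indicator 1 : Ω → ℚ) ≤ 0)
    (p) (hp : lt p.1.1 p.1.2) : n p = 0 := by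
  classical
  by_contra hnp
  refine h.not_lt_of_card_le (J := Σ p, Fin (n p)) (A := fun x ↦ x.1.1.2) (B := fun x ↦ x.1.1.1)
    (fun ω ↦ ?_) (fun x ↦ x.1.2) ⟨p, 0, Nat.pos_of_ne_zero hnp⟩ hp
  rw [natCard_sigma_fin_subtype n (ω ∈ ·.1.2), natCard_sigma_fin_subtype n (ω ∈ ·.1.1)]
  have hω : ∑ p, (if ω ∈ p.1.2 then (n p : ℚ) else 0) ≤
      ∑ p, if ω ∈ p.1.1 then (n p : ℚ) else 0 := by
    simpa [Set.indicator_apply, mul_sub, sum_sub_distrib] using hn ω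
  exact_mod_cast hω

theorem exists_nonneg_mea [Finite Ω] (h : SPlusAx lt le) (hsub : ∀ A B, lt A B → le A B) :
    ∃ w : Ω → ℝ, 0 ≤ w ∧ (∀ A B, lt A B → mea w A < mea w B) ∧
      ∀ A B, le A B → mea w A ≤ mea w B := by
  classical
  cases nonempty_fintype Ω
  obtain ⟨w, hw, hle, hlt⟩ := exists_nonneg_forall_dotProduct_pos_of_nat
    (fun p : {p : Finset Ω × Finset Ω // le p.1 p.2} ↦
      (p.1.2 : Set Ω).indicator 1 - (p.1.1 : Set Ω).indicator 1)
    {p | lt p.1.1 p.1.2} h.eq_zero_of_sum_smul_indicator_le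
  have indicator_dotProduct (A : Finset Ω) :
      (A : Set Ω).indicator 1 ⬝ᵥ w = ∑ ω ∈ A, w ω := by
    simp [dotProduct, Set.indicator_apply]
  simp only [sub_dotProduct, indicator_dotProduct, sub_nonneg, Set.mem_ofPred_eq, sub_pos]
    at hle hlt
  refine ⟨fun ω ↦ w ω, fun ω ↦ Rat.cast_nonneg.mpr (hw ω), fun A B hAB ↦ ?_, fun A B hAB ↦ ?_⟩ <;>
    rw [mea_ratCast, mea_ratCast]
  · exact Rat.cast_lt.mpr (hlt ⟨(A, B), hsub A B hAB⟩ hAB)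
  · exact Rat.cast_le.mpr (hle ⟨(A, B), hAB⟩)

end SPlusAx

/-- Representation theorem, second formulation: with `<` and `≤` nonempty
and `< ⊆ ≤`, the pair `(<, ≤)` is jointly weakly representable iff condition (S+) holds. -/
theorem stmt1 [Fintype Ω] [Nonempty Ω]
    (lt le : Finset Ω → Finset Ω → Prop)
    (hlt : ∃ A B : Finset Ω, lt A B)
    (hle : ∃ A B : Finset Ω, le A B)
    (hsub : ∀ A B : Finset Ω, lt A B → le A B) :
    (∃ w : Ω → ℝ, IsProbWeight w ∧
        (∀ A B : Finset Ω, lt A B → mea w A < mea w B) ∧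
        (∀ A B : Finset Ω, le A B → mea w A ≤ mea w B)) ↔
      (∀ n : ℕ, ∀ A B : Fin (n + 1) → Finset Ω, DomSeq A B →
        (∀ i : Fin n, le (B i.castSucc) (A i.castSucc)) →
        ¬ lt (B (Fin.last n)) (A (Fin.last n))) := by
  constructor
  · rintro ⟨w, ⟨hw, -⟩, hw_lt, hw_le⟩
    exact SPlusAx.of_mea hw hw_lt hw_le
  · intro h
    obtain ⟨w, hw, hw_lt, hw_le⟩ := SPlusAx.exists_nonneg_mea h hsub
    obtain ⟨A, B, hAB⟩ := hlt
    have hsum : 0 < ∑ ω, w ω := sum_pos_of_mea_lt_mea hw (hw_lt A B hAB)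
    refine ⟨fun ω ↦ w ω / ∑ ω, w ω, isProbWeight_div_sum hw hsum, fun A B hAB ↦ ?_,
      fun A B hAB ↦ ?_⟩ <;> rw [mea_div, mea_div]
    · exact div_lt_div_of_pos_right (hw_lt A B hAB) hsum
    · exact div_le_div_of_nonneg_right (hw_le A B hAB) hsum.le
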